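/- If a polyquantoid (N,e) has an ideal element, then there exist a tight selfdual matroid rank function r on N and t > 0 such that e = t·ř, where ř(I) = r(I) − (1/2)Σ_{i∈I} r({i}). -/

import Mathlib

open Finset

/-- Crossing a threshold while adding the elements of `S` one at a time. -/
lemma exists_critical {N : Type*} [DecidableEq N] (P : Finset N → Prop) (D S : Finset N)
    (hD : ¬ P D) (hS : P (D ∪ S)) :
    ∃ A i, i ∈ A ∧ i ∈ S ∧ P A ∧ ¬ P (A.erase i) ∧ A ⊆ D ∪ S := by
  induction S using Finset.induction_on with
  | empty => simp at hS; exact absurd hS hD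
  | insert j S hj ih =>
    by_cases h : P (D ∪ S)
    · obtain ⟨A, i, h1, h2, h3, h4, h5⟩ := ih h
      refine ⟨A, i, h1, mem_insert_of_mem h2, h3, h4, h5.trans ?_⟩
      exact union_subset_union_right (subset_insert _ _)
    · have hjn : j ∉ D ∪ S := by
        intro hjm
        apply h
        rw [union_insert, insert_eq_of_mem hjm] at hS
        exact hS
      refine ⟨D ∪ insert j S, j, by simp, by simp, hS, ?_, Subset.refl _⟩
      rw [union_insert, erase_insert hjn]
      exact h

lemma integral_increments {N : Type*} [Fintype N] [DecidableEq N] (r : Finset N → ℝ) (n : N)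
    (hinc : ∀ X Y i, X ⊆ Y → r (insert i Y) + r X ≤ r (insert i X) + r Y)
    (hlo : ∀ X i, r X ≤ r (insert i X))
    (hhi : ∀ X i, r (insert i X) ≤ r X + 1)
    (hn : ∀ X, r (insert n X) = r X ∨ r (insert n X) = r X + 1)
    (hess : ∀ i, i ≠ n → ∃ I, i ∈ I ∧ r (insert n I) = r I ∧
      r (insert n (I.erase i)) = r (I.erase i) + 1) :
    ∀ (I : Finset N) (i : N), r (insert i I) = r I ∨ r (insert i I) = r I + 1 := by
  -- minimal counterexample
  suffices H : ∀ (k : ℕ) (I : Finset N) (i : N), I.card = k →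
      r (insert i I) = r I ∨ r (insert i I) = r I + 1 from fun I i => H _ I i rfl
  intro k
  induction k using Nat.strong_induction_on with
  | _ k IH =>
  intro I i hk
  by_contra hcon
  rw [not_or] at hcon
  obtain ⟨hc0, hc1⟩ := hcon
  have hiI : i ∉ I := fun h => hc0 (by rw [insert_eq_of_mem h])
  have hd0 : r I < r (insert i I) := lt_of_le_of_ne (hlo I i) (Ne.symm hc0)
  have hd1 : r (insert i I) < r I + 1 := lt_of_le_of_ne (hhi I i) hc1
  obtain ⟨C, hC⟩ : ∃ C, C = insert i I := ⟨_, rfl⟩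
  have hiC : i ∈ C := by simp [hC]
  -- every increment at the top of `C` is strictly fractional
  have hfrac : ∀ j ∈ C, r (C.erase j) < r C ∧ r C < r (C.erase j) + 1 := by
    intro j hj
    by_cases hji : j = i
    · subst hji
      rw [hC, erase_insert hiI]
      exact ⟨hd0, hd1⟩
    · have hjI : j ∈ I := by
        rw [hC] at hj
        exact (mem_insert.1 hj).resolve_left hji
      have hlt : (I.erase j).card < k := hk ▸ card_erase_lt_of_mem hjI
      have h1 := IH _ hlt (I.erase j) j rfl
      have h2 := IH _ hlt (I.erase j) i rfl
      rw [insert_erase hjI] at h1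
      have h3 : C.erase j = insert i (I.erase j) := by
        rw [hC, erase_insert_of_ne (Ne.symm hji)]
      have h4 := hlo (C.erase j) j
      have h5 := hhi (C.erase j) j
      rw [insert_erase hj] at h4 h5
      rw [h3] at h4 h5 ⊢
      rw [← hC] at hd0 hd1
      rcases h1 with h1 | h1 <;> rcases h2 with h2 | h2 <;> constructor <;> linarith
  have hnC : n ∉ C := by
    intro h
    have h1 := hn (C.erase n)
    rw [insert_erase h] at h1
    have h2 := hfrac n h
    rcases h1 with h1 | h1 <;> linarith
  have hPmono : ∀ X Y, X ⊆ Y → r (insert n X) = r X → r (insert n Y) = r Y := by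
    intro X Y h hX
    have h1 := hinc X Y n h
    have h2 := hlo Y n
    linarith
  -- choose a critical pair with `A \ C` as small as possible
  have hex : ∃ m : ℕ, ∃ A j, j ∈ A ∧ j ∈ C ∧ r (insert n A) = r A ∧
      ¬ r (insert n (A.erase j)) = r (A.erase j) ∧ (A \ C).card = m := by
    obtain ⟨A, h1, h2, h3⟩ := hess i (fun h => hnC (h ▸ hiC))
    exact ⟨_, A, i, h1, hiC, h2, by rw [h3]; simp, rfl⟩
  classical
  obtain ⟨A, j, hjA, hjC, hA, hAj, hm⟩ := Nat.find_spec hex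
  have hmin : ∀ A' j', j' ∈ A' → j' ∈ C → r (insert n A') = r A' →
      ¬ r (insert n (A'.erase j')) = r (A'.erase j') → (A \ C).card ≤ (A' \ C).card := by
    intro A' j' h1 h2 h3 h4
    rw [hm]
    exact Nat.find_min' hex ⟨A', j', h1, h2, h3, h4, rfl⟩
  have hAj1 := (hn (A.erase j)).resolve_left hAj
  obtain ⟨D, hD⟩ : ∃ D, D = A \ C := ⟨_, rfl⟩
  have hDC : Disjoint D C := hD ▸ sdiff_disjoint
  have hB : r (insert n (D ∪ C)) = r (D ∪ C) := by
    refine hPmono A _ ?_ hA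
    rw [hD, sdiff_union_self_eq_union]
    exact subset_union_left
  have hDno : ¬ r (insert n D) = r D := by
    intro h
    apply hAj
    refine hPmono D _ ?_ h
    intro x hx
    rw [hD, mem_sdiff] at hx
    exact mem_erase.2 ⟨fun h => hx.2 (h ▸ hjC), hx.1⟩
  have hDd : ∀ d ∈ D, ¬ r (insert n (D.erase d ∪ C)) = r (D.erase d ∪ C) := by
    intro d hd hP
    have hno : ¬ r (insert n (D.erase d)) = r (D.erase d) :=
      fun h => hDno (hPmono _ _ (erase_subset _ _) h)
    obtain ⟨A', j', h1, h2, h3, h4, h5⟩ :=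
      exists_critical (fun X => r (insert n X) = r X) _ C hno hP
    have h6 := hmin A' j' h1 h2 h3 h4
    have h7 : A' \ C ⊆ D.erase d := by
      intro x hx
      rw [mem_sdiff] at hx
      exact (mem_union.1 (h5 hx.1)).resolve_right hx.2
    have h8 := card_le_card h7
    have h9 := card_erase_lt_of_mem hd
    rw [← hD] at h6
    omega
  -- each `d ∈ D` has full increment
  have hDinc : ∀ d ∈ D, r (D.erase d ∪ C) + 1 ≤ r (D ∪ C) := by
    intro d hd
    have h1 := (hn _).resolve_left (hDd d hd)
    have h2 := hlo (insert n (D.erase d ∪ C)) d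
    have h3 : insert d (insert n (D.erase d ∪ C)) = insert n (D ∪ C) := by
      rw [Finset.insert_comm, ← insert_union, insert_erase hd]
    rw [h3] at h2
    linarith
  have hlow : ∀ E ⊆ D, r C + E.card ≤ r (E ∪ C) := by
    intro E
    induction E using Finset.induction_on with
    | empty => simp
    | insert d E hd ih =>
      intro hE
      have hdD : d ∈ D := hE (mem_insert_self _ _)
      have h1 := ih ((subset_insert _ _).trans hE)
      have h2 : E ∪ C ⊆ D.erase d ∪ C := by
        apply union_subset_union_left
        intro x hx
        exact mem_erase.2 ⟨fun h => hd (h ▸ hx), hE (mem_insert_of_mem hx)⟩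
      have h3 := hinc _ _ d h2
      rw [← insert_union, ← insert_union, insert_erase hdD] at h3
      have h4 := hDinc d hdD
      rw [card_insert_of_notMem hd]
      push_cast
      linarith
  have hup : ∀ E : Finset N, r (E ∪ C.erase j) ≤ r (C.erase j) + E.card := by
    intro E
    induction E using Finset.induction_on with
    | empty => simp
    | insert d E hd ih =>
      have h1 := hhi (E ∪ C.erase j) d
      rw [insert_union, card_insert_of_notMem hd]
      push_cast
      linarith
  have hBlow := hlow D (Subset.refl _)
  have hBup := hup D
  have hBj : insert j (D ∪ C.erase j) = D ∪ C := by
    rw [← union_insert, insert_erase hjC]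
  -- `j` is dependent over `n` and the rest
  have hdep : r (insert n (D ∪ C)) ≤ r (insert n (D ∪ C.erase j)) := by
    have hsubs : insert n (A.erase j) ⊆ insert n (D ∪ C.erase j) := by
      apply insert_subset_insert
      intro x hx
      rw [mem_erase] at hx
      rw [mem_union, mem_erase, hD, mem_sdiff]
      tauto
    have h1 := hinc _ _ j hsubs
    rw [Finset.insert_comm, hBj, Finset.insert_comm, insert_erase hjA] at h1
    have h2 := hhi (A.erase j) j
    rw [insert_erase hjA] at h2
    linarith
  obtain ⟨hf0, hf1⟩ := hfrac j hjC
  have hjinc := hinc (C.erase j) (D ∪ C.erase j) j subset_union_right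
  rw [hBj, insert_erase hjC] at hjinc
  have hBlo := hlo (D ∪ C.erase j) j
  rw [hBj] at hBlo
  rcases hn (D ∪ C.erase j) with h | h
  · linarith
  · have hc := hlo (insert n (D ∪ C.erase j)) j
    rw [Finset.insert_comm, hBj] at hc
    linarith

theorem ideal_implies_tight_selfdual_matroid {N : Type*} [Fintype N] [DecidableEq N]
    (e : Finset N → ℝ)
    (hnorm : e ∅ = 0)
    (hcompl : ∀ I : Finset N, e I = e Iᶜ)
    (hsub : ∀ I J : Finset N, e (I ∪ J) + e (I ∩ J) ≤ e I + e J)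
    (n : N)
    (hperf : ∀ I ⊆ ({n}ᶜ : Finset N),
      e (insert n I) - e I = e {n} ∨ e (insert n I) - e I = -e {n})
    (hess : ∀ i ∈ ({n}ᶜ : Finset N), ∃ I ⊆ ({n}ᶜ : Finset N), i ∈ I ∧
      e (insert n I) - e I = -e {n} ∧ e (insert n (I \ {i})) - e (I \ {i}) = e {n})
    (hval : ∀ i ∈ ({n}ᶜ : Finset N), e {i} = e {n}) :
    ∃ (r : Finset N → ℝ) (t : ℝ), 0 < t ∧
      r ∅ = 0 ∧
      (∀ I J : Finset N, I ⊆ J → r I ≤ r J) ∧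
      (∀ I J : Finset N, r (I ∪ J) + r (I ∩ J) ≤ r I + r J) ∧
      (∀ I : Finset N, ∃ m : ℕ, r I = m) ∧
      (∀ i : N, r {i} = 0 ∨ r {i} = 1) ∧
      (∀ i : N, r {i}ᶜ = r Finset.univ) ∧
      (∀ I : Finset N, r I = r Iᶜ - r Finset.univ + ∑ i ∈ I, r {i}) ∧
      (∀ I : Finset N, e I = t * (r I - (1/2) * ∑ i ∈ I, r {i})) := by
  have huniv : e univ = 0 := by rw [hcompl, compl_univ, hnorm]
  have hnn : ∀ I, 0 ≤ e I := by
    intro I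
    have h := hsub I Iᶜ
    rw [union_compl, inter_compl, hnorm, huniv, ← hcompl] at h
    linarith
  have hval' : ∀ i, e {i} = e {n} := by
    intro i
    by_cases h : i = n
    · rw [h]
    · exact hval i (by simpa using h)
  have hup : ∀ X i, i ∉ X → e (insert i X) ≤ e X + e {n} := by
    intro X i hi
    have h := hsub X {i}
    rw [inter_singleton_of_notMem hi, hnorm, hval', union_comm, ← insert_eq] at h
    linarith
  have hdown : ∀ X i, i ∉ X → e X ≤ e (insert i X) + e {n} := by
    intro X i hi
    have h := hup (insert i X)ᶜ i (by simp)
    rw [← hcompl, compl_insert, insert_erase (by simpa using hi), ← hcompl] at h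
    exact h
  rcases (hnn {n}).eq_or_lt with hc | hc
  · -- degenerate case
    have hz : ∀ I, e I = 0 := by
      intro I
      induction I using Finset.induction_on with
      | empty => exact hnorm
      | insert i I hi ih =>
        have h1 := hup I i hi
        have h2 := hnn (insert i I)
        linarith
    refine ⟨fun _ => 0, 1, one_pos, rfl, ?_, ?_, ?_, ?_, ?_, ?_, ?_⟩ <;> simp [hz]
    exact ⟨0, by simp⟩
  obtain ⟨c, hcdef⟩ : ∃ c, c = e {n} := ⟨_, rfl⟩
  rw [← hcdef] at hc
  simp only [← hcdef] at hperf hess hval' hup hdown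
  obtain ⟨r, hr⟩ : ∃ r : Finset N → ℝ, ∀ I, r I = e I / (2 * c) + (I.card : ℝ) / 2 :=
    ⟨_, fun _ => rfl⟩
  have he : ∀ I, e I = 2 * c * (r I - (I.card : ℝ) / 2) := by
    intro I
    rw [hr]
    field_simp
    ring
  have hc2 : 0 < 2 * c := by linarith
  have hins : ∀ X i, i ∉ X →
      e (insert i X) - e X = 2 * c * (r (insert i X) - r X) - c := by
    intro X i hi
    rw [he, he X, card_insert_of_notMem hi]
    push_cast
    ring
  have hr0 : r ∅ = 0 := by simp [hr, hnorm]
  have hr1 : ∀ i, r {i} = 1 := by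
    intro i
    rw [hr, hval', card_singleton]
    field_simp
    norm_num
  have hrsum : ∀ I : Finset N, ∑ i ∈ I, r {i} = I.card := by
    intro I
    simp [hr1]
  have hrsub : ∀ I J : Finset N, r (I ∪ J) + r (I ∩ J) ≤ r I + r J := by
    intro I J
    have h1 := hsub I J
    have h2 : ((I ∪ J).card : ℝ) + (I ∩ J).card = I.card + J.card := by
      exact_mod_cast card_union_add_card_inter I J
    rw [he, he (I ∩ J), he I, he J] at h1
    have h3 : 2 * c * (r (I ∪ J) + r (I ∩ J)) ≤ 2 * c * (r I + r J) := by
      linear_combination h1 + c * h2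
    exact le_of_mul_le_mul_left h3 hc2
  have hlo : ∀ X i, r X ≤ r (insert i X) := by
    intro X i
    by_cases hi : i ∈ X
    · rw [insert_eq_of_mem hi]
    · have h1 := hins X i hi
      have h2 := hdown X i hi
      have h3 : 0 ≤ 2 * c * (r (insert i X) - r X) := by linarith
      have h4 := nonneg_of_mul_nonneg_right h3 hc2
      linarith
  have hhi : ∀ X i, r (insert i X) ≤ r X + 1 := by
    intro X i
    by_cases hi : i ∈ X
    · rw [insert_eq_of_mem hi]; linarith
    · have h1 := hins X i hi
      have h2 := hup X i hi
      have h3 : 2 * c * (r (insert i X) - r X) ≤ 2 * c * 1 := by linarith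
      have h4 := le_of_mul_le_mul_left h3 hc2
      linarith
  have hinc : ∀ X Y i, X ⊆ Y → r (insert i Y) + r X ≤ r (insert i X) + r Y := by
    intro X Y i hXY
    by_cases hi : i ∈ Y
    · rw [insert_eq_of_mem hi]
      have := hlo X i
      linarith
    · have h := hrsub (insert i X) Y
      rwa [insert_union, union_eq_right.2 hXY, insert_inter_of_notMem hi,
        inter_eq_left.2 hXY] at h
  have hzero : ∀ X i, i ∉ X → e (insert i X) - e X = -c → r (insert i X) = r X := by
    intro X i hi h
    have h1 := hins X i hi
    have h3 : 2 * c * (r (insert i X)) = 2 * c * r X := by linarith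
    exact mul_left_cancel₀ hc2.ne' h3
  have hone : ∀ X i, i ∉ X → e (insert i X) - e X = c → r (insert i X) = r X + 1 := by
    intro X i hi h
    have h1 := hins X i hi
    have h3 : 2 * c * (r (insert i X)) = 2 * c * (r X + 1) := by linarith
    exact mul_left_cancel₀ hc2.ne' h3
  have hnot : ∀ I : Finset N, I ⊆ ({n}ᶜ : Finset N) → n ∉ I := by
    intro I h hn
    simpa using h hn
  have hincr := integral_increments r n hinc hlo hhi
    (by
      intro X
      by_cases hX : n ∈ X
      · left; rw [insert_eq_of_mem hX]
      · rcases hperf X (by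
          intro x hx
          simp only [mem_compl, mem_singleton]
          exact fun h => hX (h ▸ hx)) with h | h
        · right; exact hone X n hX h
        · left; exact hzero X n hX h)
    (by
      intro i hi
      obtain ⟨I, h1, h2, h3, h4⟩ := hess i (by simpa using hi)
      have hnI := hnot I h1
      rw [sdiff_singleton_eq_erase] at h4
      exact ⟨I, h2, hzero I n hnI h3,
        hone _ n (fun h => hnI (mem_of_mem_erase h)) h4⟩)
  have hcompl_card : ∀ I : Finset N, (I.card : ℝ) + (Iᶜ).card = (univ : Finset N).card := by
    intro I
    exact_mod_cast card_add_card_compl I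
  refine ⟨r, 2 * c, hc2, hr0, ?_, hrsub, ?_, fun i => Or.inr (hr1 i), ?_, ?_, ?_⟩
  · intro I J hIJ
    have key : ∀ E : Finset N, r I ≤ r (E ∪ I) := by
      intro E
      induction E using Finset.induction_on with
      | empty => simp
      | insert d E hd ih =>
        rw [insert_union]
        exact ih.trans (hlo _ _)
    have := key J
    rwa [union_eq_left.2 hIJ] at this
  · intro I
    induction I using Finset.induction_on with
    | empty => exact ⟨0, by simp [hr0]⟩
    | insert i I hi ih =>
      obtain ⟨m, hm⟩ := ih
      rcases hincr I i with h | h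
      · exact ⟨m, by rw [h, hm]⟩
      · exact ⟨m + 1, by rw [h, hm]; push_cast; ring⟩
  · intro i
    have h := hcompl_card {i}
    have h1 := hr1 i
    rw [hr] at h1
    rw [hr, hr univ, ← hcompl, huniv, ← h]
    simp only [card_singleton, Nat.cast_one, zero_div] at h1 ⊢
    linarith
  · intro I
    have h := hcompl_card I
    rw [hrsum, hr, hr Iᶜ, hr univ, ← hcompl, huniv, ← h]
    ring
  · intro I
    rw [hrsum, he]
    ring
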